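/- Let a ≥ 3 be an integer, α = (a + √(a²−4))/2, β = (a − √(a²−4))/2, and G_k = (α^k − β^k)/(α − β). Then for every n ≥ 2, (∑_{k=n}^∞ 1/G_k³)^{−1} < G_n³ − G_{n−1}³ − 3α^{n+2}/((α−β)·α·(α⁵−1)) + λ₁, where λ₁ = 3(α−1)/((α−β)³·αⁿ) + 4/α^{n+3}. -/

import Mathlib

/-!
Since `αβ = 1`, `G_k = (1 - β²ᵏ) / ((α - β) βᵏ)`, and Bernoulli's inequality `(1 - y)⁻³ ≥ 1 + 3y`
bounds the tail of `∑ 1 / G_k³` from below by two geometric series, of ratios `β³` and `β⁵`.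
Inverting this bound to second order gives an upper bound for the left-hand side with three terms,
of orders `α³ⁿ`, `αⁿ` and `α⁻ⁿ`. On the right-hand side the `α³ⁿ` term is the same, the first
summand of `λ₁` cancels the `α⁻ⁿ` term of `G_n³ - G_{n-1}³`, and, up to the factor `(α - β)⁻³`, the
`αⁿ` term is larger by `3 αⁿ β (1 - β) (1 - β²)² / (1 - β⁵)`. For `β ≤ 1 / 2` and `n ≥ 2` this
excess absorbs the `α⁻ⁿ` term on the left, and what remains on the right is positive.
-/

section OrderedField

variable {K : Type*} [Field K] [LinearOrder K] [IsStrictOrderedRing K]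

lemma pos_of_mul_eq_one_of_one_lt {x y : K} (hxy : x * y = 1) (hx : 1 < x) : 0 < y :=
  pos_of_mul_pos_right (hxy ▸ one_pos) (zero_le_one.trans hx.le)

lemma lt_one_of_mul_eq_one_of_one_lt {x y : K} (hxy : x * y = 1) (hx : 1 < x) : y < 1 :=
  hxy ▸ lt_mul_of_one_lt_left (pos_of_mul_eq_one_of_one_lt hxy hx) hx

lemma one_add_mul_le_inv_one_sub_pow {y : K} (hy : -1 ≤ y) (hy1 : y < 1) (m : ℕ) :
    1 + m * y ≤ ((1 - y) ^ m)⁻¹ := by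
  have hpow : 0 < (1 - y) ^ m := pow_pos (sub_pos.2 hy1) m
  rw [← one_div, le_div_iff₀ hpow]
  calc (1 + m * y) * (1 - y) ^ m ≤ (1 + y) ^ m * (1 - y) ^ m :=
        mul_le_mul_of_nonneg_right (one_add_mul_le_pow (by linarith) m) hpow.le
    _ = (1 - y ^ 2) ^ m := by rw [← mul_pow]; ring
    _ ≤ 1 := pow_le_one₀ (by nlinarith) (by linarith [sq_nonneg y])

lemma inv_add_le_inv_sub_add {x y : K} (hx : 0 < x) (hy : 0 ≤ y) :
    (x + y)⁻¹ ≤ x⁻¹ - y / x ^ 2 + y ^ 2 / x ^ 3 := by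
  have hmul : (x + y) * (x⁻¹ - y / x ^ 2 + y ^ 2 / x ^ 3) = 1 + (y / x) ^ 3 := by
    field_simp
    ring
  rw [inv_le_iff_one_le_mul₀' (by positivity), hmul]
  exact le_add_of_nonneg_right (by positivity)

lemma three_mul_mul_one_sub_cube_le {b s : K} (hb : 0 ≤ b) (hb2 : b ≤ 1 / 2) (hs : s ≤ b ^ 4) :
    3 * s * (1 - b ^ 3) ^ 3 ≤ b * (1 - b) * (1 - b ^ 2) ^ 2 * (1 - b ^ 5) := by
  have hb3 : b ^ 3 ≤ 1 := pow_le_one₀ hb (by linarith)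
  have hb5 : b ^ 5 ≤ 1 / 32 := (pow_le_pow_left₀ hb hb2 5).trans_eq (by norm_num)
  have hquad : b * (1 + b + b ^ 2) ≤ 7 / 12 * (1 + b) := by nlinarith
  have hcubic : 3 * (b * (1 + b + b ^ 2)) ^ 3 ≤ (1 + b) ^ 2 * (1 - b ^ 5) := by
    calc 3 * (b * (1 + b + b ^ 2)) ^ 3 ≤ 3 * (7 / 12 * (1 + b)) ^ 3 := by gcongr
      _ = (1 + b) ^ 2 * (343 / 576 * (1 + b)) := by ring
      _ ≤ (1 + b) ^ 2 * (1 - b ^ 5) := by gcongr; linarith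
  have hb1 : 0 ≤ 1 - b := by linarith
  calc 3 * s * (1 - b ^ 3) ^ 3 ≤ 3 * b ^ 4 * (1 - b ^ 3) ^ 3 := by
        have := sub_nonneg.2 hb3
        gcongr
    _ = b * (1 - b) ^ 3 * (3 * (b * (1 + b + b ^ 2)) ^ 3) := by ring
    _ ≤ b * (1 - b) ^ 3 * ((1 + b) ^ 2 * (1 - b ^ 5)) := by gcongr
    _ = b * (1 - b) * (1 - b ^ 2) ^ 2 * (1 - b ^ 5) := by ring

end OrderedField

/-- The Lucas sequence `0, 1, α + β, …` of the recurrence with characteristic roots `α` and `β`,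
given by Binet's formula (so it is identically `0` when `α = β`). -/
noncomputable def binet (α β : ℝ) (k : ℕ) : ℝ := (α ^ k - β ^ k) / (α - β)

section Binet

variable {α β : ℝ}

lemma pow_le_binet_succ (hβ : 0 ≤ β) (hβα : β < α) (k : ℕ) : α ^ k ≤ binet α β (k + 1) := by
  rw [binet, le_div_iff₀ (sub_pos.2 hβα)]
  have hmono : β * β ^ k ≤ β * α ^ k := by gcongr
  linear_combination hmono

lemma summable_inv_binet_pow (hα : 1 < α) (hβ : 0 ≤ β) (hβα : β < α) {m : ℕ} (hm : m ≠ 0) :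
    Summable fun k => (binet α β k ^ m)⁻¹ := by
  have hα0 : 0 < α := one_pos.trans hα
  have hgeom : Summable fun k : ℕ => ((α ^ m)⁻¹) ^ k :=
    summable_geometric_of_lt_one (by positivity) (inv_lt_one_of_one_lt₀ (one_lt_pow₀ hα hm))
  rw [← summable_nat_add_iff 1]
  refine hgeom.of_nonneg_of_le (fun k => ?_) (fun k => ?_)
  · have := (pow_pos hα0 k).le.trans (pow_le_binet_succ hβ hβα k)
    positivity
  · rw [inv_pow, ← pow_mul, mul_comm m k, pow_mul]
    have := pow_le_binet_succ hβ hβα k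
    gcongr

section ReciprocalRoots

variable (hαβ : α * β = 1)

include hαβ

lemma inv_binet (k : ℕ) : (binet α β k)⁻¹ = (α - β) * β ^ k * (1 - (β ^ k) ^ 2)⁻¹ := by
  have hk := pow_mul_pow_eq_one k hαβ
  have hβk : β ^ k ≠ 0 := right_ne_zero_of_mul_eq_one hk
  have hfactor : 1 - (β ^ k) ^ 2 = (α ^ k - β ^ k) * β ^ k := by linear_combination -hk
  rw [binet, hfactor]
  field_simp

lemma le_inv_binet_pow (hα : 1 < α) {k : ℕ} (hk : k ≠ 0) (m : ℕ) :
    ((α - β) * β ^ k) ^ m * (1 + m * (β ^ k) ^ 2) ≤ (binet α β k ^ m)⁻¹ := by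
  have hβ := pos_of_mul_eq_one_of_one_lt hαβ hα
  have hβ1 := lt_one_of_mul_eq_one_of_one_lt hαβ hα
  have hD : 0 < α - β := by linarith
  have hβk : (β ^ k) ^ 2 < 1 := pow_lt_one₀ (by positivity) (pow_lt_one₀ hβ.le hβ1 hk) two_ne_zero
  rw [← inv_pow, inv_binet hαβ, mul_pow _ (_⁻¹), inv_pow]
  gcongr
  exact one_add_mul_le_inv_one_sub_pow (by linarith [sq_nonneg (β ^ k)]) hβk m

lemma le_tsum_inv_binet_pow (hα : 1 < α) {m n : ℕ} (hm : m ≠ 0) (hn : n ≠ 0) :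
    ((α - β) * β ^ n) ^ m * ((1 - β ^ m)⁻¹ + m * (β ^ n) ^ 2 * (1 - β ^ (m + 2))⁻¹) ≤
      ∑' k, (binet α β (n + k) ^ m)⁻¹ := by
  have hβ := pos_of_mul_eq_one_of_one_lt hαβ hα
  have hβ1 := lt_one_of_mul_eq_one_of_one_lt hαβ hα
  have hgeom {j : ℕ} (hj : j ≠ 0) : HasSum (fun k => (β ^ j) ^ k) (1 - β ^ j)⁻¹ :=
    hasSum_geometric_of_lt_one (by positivity) (pow_lt_one₀ hβ.le hβ1 hj)
  have hlower := ((hgeom hm).add ((hgeom (j := m + 2) (by omega)).mul_left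
    (m * (β ^ n) ^ 2))).mul_left (((α - β) * β ^ n) ^ m)
  have htail : Summable fun k => (binet α β (n + k) ^ m)⁻¹ := by
    simpa only [add_comm n] using
      (summable_nat_add_iff n).2 (summable_inv_binet_pow hα hβ.le (hβ1.trans hα) hm)
  refine hasSum_le (fun k => ?_) hlower htail.hasSum
  refine Eq.trans_le ?_ (le_inv_binet_pow hαβ hα (k := n + k) (by omega) m)
  simp only [pow_add, mul_pow]
  ring

lemma inv_tsum_inv_binet_pow_le (hα : 1 < α) {m n : ℕ} (hm : m ≠ 0) (hn : n ≠ 0) :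
    (∑' k, (binet α β (n + k) ^ m)⁻¹)⁻¹ ≤
      (α ^ n / (α - β)) ^ m * (1 - β ^ m - m * (β ^ n) ^ 2 * (1 - β ^ m) ^ 2 / (1 - β ^ (m + 2)) +
        (m * (β ^ n) ^ 2) ^ 2 * (1 - β ^ m) ^ 3 / (1 - β ^ (m + 2)) ^ 2) := by
  have hβ := pos_of_mul_eq_one_of_one_lt hαβ hα
  have hβ1 := lt_one_of_mul_eq_one_of_one_lt hαβ hα
  have : 0 < α := one_pos.trans hα
  have hD : 0 < α - β := by linarith
  have hpos {j : ℕ} (hj : j ≠ 0) : 0 < 1 - β ^ j := sub_pos.2 (pow_lt_one₀ hβ.le hβ1 hj)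
  have hm₀ := hpos hm
  have hm₂ := hpos (j := m + 2) (by omega)
  have hscale : (((α - β) * β ^ n) ^ m)⁻¹ = (α ^ n / (α - β)) ^ m := by
    rw [← inv_pow, mul_inv, ← eq_inv_of_mul_eq_one_left (pow_mul_pow_eq_one n hαβ),
      div_eq_inv_mul]
  have hinv := inv_add_le_inv_sub_add (inv_pos.2 hm₀)
    (y := m * (β ^ n) ^ 2 * (1 - β ^ (m + 2))⁻¹) (by positivity)
  calc (∑' k, (binet α β (n + k) ^ m)⁻¹)⁻¹
      ≤ (((α - β) * β ^ n) ^ m *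
          ((1 - β ^ m)⁻¹ + m * (β ^ n) ^ 2 * (1 - β ^ (m + 2))⁻¹))⁻¹ :=
        inv_anti₀ (by positivity) (le_tsum_inv_binet_pow hαβ hα hm hn)
    _ ≤ _ := by
        rw [mul_inv, hscale]
        refine mul_le_mul_of_nonneg_left (hinv.trans_eq ?_) (by positivity)
        field_simp

lemma binet_succ_cube_sub_binet_cube (n : ℕ) :
    binet α β (n + 1) ^ 3 - binet α β n ^ 3 =
      ((α ^ (n + 1)) ^ 3 * (1 - β ^ 3) - 3 * α ^ (n + 1) * (1 - β) -
        3 * β ^ (n + 1) * (α - 1) + (β ^ (n + 1)) ^ 3 * (α ^ 3 - 1)) / (α - β) ^ 3 := by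
  have hprod := pow_mul_pow_eq_one (n + 1) hαβ
  have hαn : α ^ n = α ^ (n + 1) * β := by linear_combination -α ^ n * hαβ
  have hβn : β ^ n = β ^ (n + 1) * α := by linear_combination -β ^ n * hαβ
  rw [binet, binet, div_pow, div_pow, ← sub_div, hαn, hβn]
  generalize α ^ (n + 1) = p at *
  generalize β ^ (n + 1) = r at *
  congr 1
  linear_combination (3 * p ^ 2 * r * β - 3 * p * r ^ 2 * α) * hαβ +
    (-3 * p + 3 * r + 3 * p * β - 3 * r * α) * hprod

lemma three_mul_pow_div_eq (hα : 1 < α) (n : ℕ) :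
    3 * α ^ (n + 2) / ((α - β) * α * (α ^ 5 - 1)) =
      3 * α ^ n * (β ^ 2 * (1 - β ^ 2) ^ 2 / (1 - β ^ 5)) / (α - β) ^ 3 := by
  have hβ := pos_of_mul_eq_one_of_one_lt hαβ hα
  have hβ1 := lt_one_of_mul_eq_one_of_one_lt hαβ hα
  have hα0 : α ≠ 0 := (one_pos.trans hα).ne'
  have hD : α - β ≠ 0 := by linarith
  have hβ5 : 1 - β ^ 5 ≠ 0 := (sub_pos.2 (pow_lt_one₀ hβ.le hβ1 (by norm_num))).ne'
  have hα5 : α ^ 5 - 1 = α ^ 5 * (1 - β ^ 5) := by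
    linear_combination pow_mul_pow_eq_one 5 hαβ
  have hβ2 : 1 - β ^ 2 = β * (α - β) := by linear_combination -hαβ
  rw [hα5, hβ2]
  field_simp
  linear_combination -α ^ (n + 2) * pow_mul_pow_eq_one 4 hαβ

lemma binet_succ_cube_sub_binet_cube_sub_add (hα : 1 < α) (n : ℕ) :
    binet α β (n + 1) ^ 3 - binet α β n ^ 3 -
        3 * α ^ (n + 1 + 2) / ((α - β) * α * (α ^ 5 - 1)) +
        3 * (α - 1) / ((α - β) ^ 3 * α ^ (n + 1)) =
      (α ^ (n + 1) / (α - β)) ^ 3 * (1 - β ^ 3 - 3 * (β ^ (n + 1)) ^ 2 *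
          ((1 - β ^ 3) ^ 2 - β * (1 - β) * (1 - β ^ 2) ^ 2) / (1 - β ^ 5)) +
        (β ^ (n + 1)) ^ 3 * (α ^ 3 - 1) / (α - β) ^ 3 := by
  have hβ := pos_of_mul_eq_one_of_one_lt hαβ hα
  have hβ1 := lt_one_of_mul_eq_one_of_one_lt hαβ hα
  have hβ5 : 1 - β ^ 5 ≠ 0 := (sub_pos.2 (pow_lt_one₀ hβ.le hβ1 (by norm_num))).ne'
  have hp : α ^ (n + 1) ≠ 0 := pow_ne_zero _ (one_pos.trans hα).ne'
  have hD : α - β ≠ 0 := by linarith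
  rw [binet_succ_cube_sub_binet_cube hαβ, three_mul_pow_div_eq hαβ hα,
    eq_inv_of_mul_eq_one_right (pow_mul_pow_eq_one (n + 1) hαβ)]
  generalize α ^ (n + 1) = p at *
  field_simp
  ring

lemma inv_tsum_inv_binet_cube_le (hα : 2 ≤ α) {n : ℕ} (hn : 2 ≤ n) :
    (∑' k, (binet α β (n + k) ^ 3)⁻¹)⁻¹ ≤
      (α ^ n / (α - β)) ^ 3 * (1 - β ^ 3 - 3 * (β ^ n) ^ 2 *
        ((1 - β ^ 3) ^ 2 - β * (1 - β) * (1 - β ^ 2) ^ 2) / (1 - β ^ 5)) := by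
  have hα1 : 1 < α := by linarith
  have hβ := pos_of_mul_eq_one_of_one_lt hαβ hα1
  have hβ2 : β ≤ 1 / 2 := by nlinarith
  have hβ5 : 0 < 1 - β ^ 5 := sub_pos.2 (pow_lt_one₀ hβ.le (by linarith) (by norm_num))
  have hD : 0 < α - β := by linarith
  have hs : (β ^ n) ^ 2 ≤ β ^ 4 := by
    rw [← pow_mul]
    exact pow_le_pow_of_le_one hβ.le (by linarith) (by omega)
  have hquadratic : (3 * (β ^ n) ^ 2) ^ 2 * (1 - β ^ 3) ^ 3 / (1 - β ^ 5) ^ 2 ≤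
      3 * (β ^ n) ^ 2 * (β * (1 - β) * (1 - β ^ 2) ^ 2) / (1 - β ^ 5) := by
    rw [div_le_div_iff₀ (by positivity) hβ5]
    calc (3 * (β ^ n) ^ 2) ^ 2 * (1 - β ^ 3) ^ 3 * (1 - β ^ 5)
        = 3 * (β ^ n) ^ 2 * (1 - β ^ 5) * (3 * (β ^ n) ^ 2 * (1 - β ^ 3) ^ 3) := by ring
      _ ≤ 3 * (β ^ n) ^ 2 * (1 - β ^ 5) * (β * (1 - β) * (1 - β ^ 2) ^ 2 * (1 - β ^ 5)) :=
        mul_le_mul_of_nonneg_left (three_mul_mul_one_sub_cube_le hβ.le hβ2 hs) (by positivity)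
      _ = _ := by ring
  refine (inv_tsum_inv_binet_pow_le hαβ hα1 three_ne_zero (by omega)).trans
    (mul_le_mul_of_nonneg_left ?_ (by positivity))
  rw [mul_sub, sub_div]
  push_cast
  linarith

end ReciprocalRoots

end Binet

theorem stmt_5_general {α β : ℝ} (hαβ : α * β = 1) (hα : 2 ≤ α) {n : ℕ} (hn : 2 ≤ n) :
    (∑' k, 1 / binet α β (n + k) ^ 3)⁻¹ <
      binet α β n ^ 3 - binet α β (n - 1) ^ 3 -
        3 * α ^ (n + 2) / ((α - β) * α * (α ^ 5 - 1)) +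
        (3 * (α - 1) / ((α - β) ^ 3 * α ^ n) + 4 / α ^ (n + 3)) := by
  have hα1 : 1 < α := by linarith
  have hβ := pos_of_mul_eq_one_of_one_lt hαβ hα1
  have hβ1 := lt_one_of_mul_eq_one_of_one_lt hαβ hα1
  have hD : 0 < α - β := by linarith
  have hα3 : 0 < α ^ 3 - 1 := sub_pos.2 (one_lt_pow₀ hα1 three_ne_zero)
  have hrest : 0 < (β ^ n) ^ 3 * (α ^ 3 - 1) / (α - β) ^ 3 + 4 / α ^ (n + 3) := by positivity
  have htail := inv_tsum_inv_binet_cube_le hαβ hα hn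
  obtain ⟨m, rfl⟩ : ∃ m, n = m + 1 := ⟨n - 1, by omega⟩
  simp only [one_div, Nat.add_sub_cancel]
  rw [← add_assoc, binet_succ_cube_sub_binet_cube_sub_add hαβ hα1]
  linarith

lemma quadratic_root_mul_root {a α β : ℝ} (ha : 4 ≤ a ^ 2)
    (hα : α = (a + √(a ^ 2 - 4)) / 2) (hβ : β = (a - √(a ^ 2 - 4)) / 2) : α * β = 1 := by
  have hsq := Real.sq_sqrt (sub_nonneg.2 ha)
  rw [hα, hβ]
  linear_combination -hsq / 4

lemma two_le_quadratic_root {a : ℝ} (ha : 5 / 2 ≤ a) : 2 ≤ (a + √(a ^ 2 - 4)) / 2 := by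
  have : 3 / 2 ≤ √(a ^ 2 - 4) := Real.le_sqrt_of_sq_le (by nlinarith)
  linarith

theorem stmt_5 (a : ℤ) (ha : 3 ≤ a) (α β : ℝ)
    (hα : α = ((a : ℝ) + Real.sqrt ((a : ℝ) ^ 2 - 4)) / 2)
    (hβ : β = ((a : ℝ) - Real.sqrt ((a : ℝ) ^ 2 - 4)) / 2)
    (G : ℕ → ℝ) (hG : ∀ k : ℕ, G k = (α ^ k - β ^ k) / (α - β)) :
    ∀ n : ℕ, 2 ≤ n →
      (∑' k : ℕ, 1 / (G (n + k)) ^ 3)⁻¹ <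
        G n ^ 3 - G (n - 1) ^ 3 -
          3 * α ^ (n + 2) / ((α - β) * α * (α ^ 5 - 1)) +
          (3 * (α - 1) / ((α - β) ^ 3 * α ^ n) + 4 / α ^ (n + 3)) := by
  have ha' : (3 : ℝ) ≤ a := by exact_mod_cast ha
  obtain rfl : G = binet α β := funext hG
  exact fun n => stmt_5_general (quadratic_root_mul_root (by nlinarith) hα hβ)
    (hα ▸ two_le_quadratic_root (by linarith))
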